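/- Let p be an odd prime and e : ℕ → ℕ → ℕ the recursively defined sequence (see context). There exist a real number c > 1 and a natural number N₀ such that for every n ≥ N₀ there exists d ∈ ℕ with (e d n : ℝ) ≥ c^n. That is, one may find weights aₙ = 2dₙ such that dim Ext^n(k, Δ(aₙ)) grows exponentially in n. -/

import Mathlib

/-- For an odd prime `p`, the recursively defined dimensions
`e p d m = dim Ext^m(Δ(0), Δ(2d))` over `SL₂` in characteristic `p`:
`e 0 0 = 1`, `e 0 m = 0` for `m ≥ 1`; `e d m = 0` if `d > 0` is not of the form
`kp` or `kp − 1` with `k ≥ 1`; and for `k ≥ 1`: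
`e (kp) m = (if m ≥ 1 then e (kp−1) (m−1) else 0)` and
`e (kp−1) m = (if m ≥ 1 then e ((k−1)p) (m−1) else 0) + e (k−1) m`. -/
def e (p : ℕ) : ℕ → ℕ → ℕ
  | 0, 0 => 1
  | 0, _ + 1 => 0
  | d + 1, m =>
    if h1 : (d + 1) % p = 0 then
      match m with
      | 0 => 0
      | m' + 1 => e p d m'
    else if h2 : (d + 2) % p = 0 then
      (match m with
       | 0 => 0
       | m' + 1 => e p (d + 2 - p) m') + e p ((d + 2) / p - 1) m
    else 0
termination_by d m => d
decreasing_by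
  · omega
  · have hp : 2 ≤ p := by
      by_contra hlt
      push_neg at hlt
      interval_cases p
      · simp at h2
      · omega
    omega
  · have hp : 2 ≤ p := by
      by_contra hlt
      push_neg at hlt
      interval_cases p
      · simp at h2
      · omega
    have h3 : (d + 2) / p ≤ (d + 2) / 2 := Nat.div_le_div_left hp (by omega)
    omega

theorem e_top (p : ℕ) (d m : ℕ) (h : (d + 1) % p = 0) : e p (d + 1) (m + 1) = e p d m := by
  rw [e]
  simp [h]

theorem e_pred (p : ℕ) (hp : 2 ≤ p) (k m : ℕ) :
    e p ((k + 1) * p - 1) (m + 1) = e p (k * p) m + e p k (m + 1) := by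
  obtain ⟨d, hd⟩ : ∃ d, (k + 1) * p = d + 2 := ⟨(k + 1) * p - 2, by
    have : (k + 1) * p = k * p + p := by ring
    omega⟩
  have h2 : (d + 2) % p = 0 := by rw [← hd]; simp
  have h1 : ¬ (d + 1) % p = 0 := by
    intro h
    have a := Nat.dvd_of_mod_eq_zero h
    have b := Nat.dvd_of_mod_eq_zero h2
    have c := (Nat.dvd_add_right a).1 (show p ∣ (d + 1) + 1 from b)
    have := Nat.le_of_dvd one_pos c
    omega
  have h3 : d + 2 - p = k * p := by
    rw [← hd]
    have : (k + 1) * p = k * p + p := by ring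
    omega
  have h4 : (d + 2) / p - 1 = k := by
    rw [← hd, Nat.mul_div_cancel _ (by omega)]
    omega
  rw [hd, show d + 2 - 1 = d + 1 from rfl, e]
  simp only [h1, h2, h3, h4, dite_false, dite_true]

theorem e_pred_zero (p : ℕ) (hp : 2 ≤ p) (k : ℕ) :
    e p ((k + 1) * p - 1) 0 = e p k 0 := by
  obtain ⟨d, hd⟩ : ∃ d, (k + 1) * p = d + 2 := ⟨(k + 1) * p - 2, by
    have : (k + 1) * p = k * p + p := by ring
    omega⟩
  have h2 : (d + 2) % p = 0 := by rw [← hd]; simp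
  have h1 : ¬ (d + 1) % p = 0 := by
    intro h
    have a := Nat.dvd_of_mod_eq_zero h
    have b := Nat.dvd_of_mod_eq_zero h2
    have c := (Nat.dvd_add_right a).1 (show p ∣ (d + 1) + 1 from b)
    have := Nat.le_of_dvd one_pos c
    omega
  have h4 : (d + 2) / p - 1 = k := by
    rw [← hd, Nat.mul_div_cancel _ (by omega)]
    omega
  rw [hd, show d + 2 - 1 = d + 1 from rfl, e]
  simp only [h1, h2, h4, dite_false, dite_true, zero_add]

theorem e_mul (p : ℕ) (hp : 2 ≤ p) (k m : ℕ) :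
    e p ((k + 1) * p) (m + 1) = e p ((k + 1) * p - 1) m := by
  obtain ⟨d, hd⟩ : ∃ d, (k + 1) * p = d + 1 := ⟨(k + 1) * p - 1, by
    have : (k + 1) * p = k * p + p := by ring
    omega⟩
  rw [hd]
  exact e_top p d m (by rw [← hd]; simp)

theorem e_mul_zero (p : ℕ) (hp : 2 ≤ p) (k : ℕ) : e p ((k + 1) * p) 0 = 0 := by
  obtain ⟨d, hd⟩ : ∃ d, (k + 1) * p = d + 1 := ⟨(k + 1) * p - 1, by
    have : (k + 1) * p = k * p + p := by ring
    omega⟩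
  have h : (d + 1) % p = 0 := by rw [← hd]; simp
  rw [hd, e]
  simp [h]

theorem e_pred_ge (p : ℕ) (hp : 2 ≤ p) (k m : ℕ) :
    e p k m ≤ e p ((k + 1) * p - 1) m := by
  cases m with
  | zero => rw [e_pred_zero p hp]
  | succ m => rw [e_pred p hp]; omega

theorem e_frob (p : ℕ) (hp : 2 ≤ p) (k m : ℕ) :
    e p (k * p) m ≤ e p (k * p * p) m := by
  cases k with
  | zero => simp
  | succ k =>
    cases m with
    | zero => rw [e_mul_zero p hp]; omega
    | succ m =>
      obtain ⟨d, hd⟩ : ∃ d, (k + 1) * p = d + 1 := ⟨(k + 1) * p - 1, by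
        have : (k + 1) * p = k * p + p := by ring
        omega⟩
      rw [e_mul p hp, hd, e_mul p hp]
      exact e_pred_ge p hp d m

theorem e_step (p : ℕ) (hp : 2 ≤ p) (k m : ℕ) :
    e p (k * p) m + e p (k * p) (m + 1) ≤ e p ((k * p + 1) * p) (m + 2) := by
  rw [e_mul p hp, e_pred p hp]
  have := e_frob p hp k m
  omega

def kk (p : ℕ) : ℕ → ℕ
  | 0 => 0
  | r + 1 => kk p r * p + 1

theorem e_choose (p : ℕ) (hp : 2 ≤ p) (r : ℕ) : ∀ x, r.choose x ≤ e p (kk p r * p) (r + x) := by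
  induction r with
  | zero =>
    intro x
    cases x with
    | zero => simp [kk, e]
    | succ x => simp
  | succ r ih =>
    intro x
    cases x with
    | zero =>
      cases r with
      | zero =>
        have h := e_mul p hp 0 0
        rw [e_pred_zero p hp] at h
        simp [kk, e] at h ⊢
        omega
      | succ r =>
        have h := e_step p hp (kk p (r + 1)) r
        have h' := ih 0
        simp only [Nat.choose_zero_right, add_zero] at h' ⊢
        show 1 ≤ e p ((kk p (r + 1) * p + 1) * p) (r + 2)
        omega
    | succ x =>
      have h := e_step p hp (kk p r) (r + x)
      have h1 := ih x
      have h2 := ih (x + 1)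
      rw [Nat.choose_succ_succ', kk, show r + 1 + (x + 1) = r + x + 2 by ring]
      rw [← add_assoc] at h2
      omega

theorem two_pow_le_cb (q : ℕ) : 2 ^ q ≤ (2 * q).choose q := by
  induction q with
  | zero => simp
  | succ q ih =>
    have h1 : (2 * (q + 1)).choose (q + 1)
        = (2 * q + 1).choose q + (2 * q + 1).choose (q + 1) := by
      rw [show 2 * (q + 1) = 2 * q + 1 + 1 by ring, Nat.choose_succ_succ]
    have h2 : (2 * q).choose q ≤ (2 * q + 1).choose q := Nat.choose_le_choose q (by omega)
    have h3 : (2 * q + 1).choose (q + 1) = (2 * q).choose q + (2 * q).choose (q + 1) :=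
      Nat.choose_succ_succ _ _
    rw [pow_succ]
    omega

/-- Exponential growth for odd `p`: there are `c > 1` and `N₀` such that for every
`n ≥ N₀` there is a weight `2d` with `dim Ext^n(k, Δ(2d)) = e p d n ≥ c^n`. -/
theorem exponential_growth_odd_p (p : ℕ) (hp : p.Prime) (hodd : Odd p) :
    ∃ c : ℝ, 1 < c ∧ ∃ N₀ : ℕ, ∀ n : ℕ, N₀ ≤ n → ∃ d : ℕ, c ^ n ≤ (e p d n : ℝ) := by
  have hp2 := hp.two_le
  refine ⟨1.1, by norm_num, 3, fun n hn => ?_⟩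
  obtain ⟨q, hq, d, hd⟩ : ∃ q, n ≤ 5 * q ∧ ∃ d, 2 ^ q ≤ e p d n := by
    refine ⟨n / 3, by omega, ?_⟩
    generalize hq : n / 3 = q
    have h0 := two_pow_le_cb q
    have h2 : (2 * q).choose q ≤ (2 * q + 1).choose q := Nat.choose_le_choose q (by omega)
    have h3 : (2 * q + 1).choose (q + 1) = (2 * q).choose q + (2 * q).choose (q + 1) :=
      Nat.choose_succ_succ _ _
    have hn3 : n = 2 * q + q ∨ n = 2 * q + 1 + q ∨ n = 2 * q + 1 + (q + 1) := by omega
    rcases hn3 with h | h | h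
    · exact ⟨_, h ▸ h0.trans (e_choose p hp2 (2 * q) q)⟩
    · exact ⟨_, h ▸ (h0.trans h2).trans (e_choose p hp2 (2 * q + 1) q)⟩
    · exact ⟨_, h ▸ (show 2 ^ q ≤ (2 * q + 1).choose (q + 1) by omega).trans
        (e_choose p hp2 (2 * q + 1) (q + 1))⟩
  refine ⟨d, ?_⟩
  calc (1.1 : ℝ) ^ n ≤ 1.1 ^ (5 * q) := pow_le_pow_right₀ (by norm_num) hq
    _ = (1.1 ^ 5) ^ q := pow_mul _ _ _
    _ ≤ 2 ^ q := pow_le_pow_left₀ (by norm_num) (by norm_num) q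
    _ ≤ (e p d n : ℝ) := by exact_mod_cast hd
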